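/- arXiv:2212.02986 — 4 statements merged into one kernel-verified Lean document; each statement's English description precedes it below -/
import Mathlib

section
/- $\sum_{n=1}^{\infty} \frac{21n-8}{n^3 \binom{2n}{n}^3}\left(H_{2n-1}^{(2)} - \frac{25}{8} H_{n-1}^{(2)}\right) = \frac{47\pi^4}{2880}$. -/
open Filter Topology

/-- Generalized harmonic number `H_n^{(s)} = ∑_{k=1}^n 1/k^s`. -/
noncomputable def H (s n : ℕ) : ℝ := ∑ k ∈ Finset.range n, 1 / ((k:ℝ) + 1) ^ s

open Nat in
noncomputable def F0 (n k : ℕ) : ℝ :=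
  ((n + k)! : ℝ)^2 * (n ! : ℝ)^4 / (((2*n+k+1)! : ℝ)^2 * ((2*n)! : ℝ))

noncomputable def hh (n k : ℕ) : ℝ := H 2 (2*n+k+1) - 3/8 * H 2 (n+k) - 11/4 * H 2 n

noncomputable def ff (n k : ℕ) : ℝ := F0 n k * hh n k

noncomputable def Y0 (n k : ℝ) : ℝ :=
  (13+60*n+102*n^2+76*n^3+21*n^4) + (20+68*n+76*n^2+28*n^3)*k + (11+24*n+13*n^2)*k^2 + (2+2*n)*k^3

noncomputable def Y1 (n k : ℝ) : ℝ :=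
  -(13+34*n+21*n^2)/4 + (1+n)/2*k + 5/8*k^2

noncomputable def gg (n k : ℕ) : ℝ :=
  F0 n k / ((2*n+1)*(2*n+2)*(2*n+k+2)^2) * (Y0 n k * hh n k + Y1 n k + Y0 n k / (2*n+k+2)^2)

lemma H_succ (n : ℕ) : H 2 (n+1) = H 2 n + 1 / ((n:ℝ)+1)^2 := by
  simp [H, Finset.sum_range_succ]

lemma F0_k (n k : ℕ) : F0 n (k+1) = F0 n k * (((n:ℝ)+k+1)^2 / (2*n+k+2)^2) := by
  unfold F0
  rw [show n + (k+1) = (n+k)+1 by ring, show 2*n+((k+1))+1 = (2*n+k+1)+1 by ring]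
  simp only [Nat.factorial_succ (n+k), Nat.factorial_succ (2*n+k+1)]
  have h1 : ((n+k).factorial:ℝ) ≠ 0 := by positivity
  have h2 : ((2*n+k+1).factorial:ℝ) ≠ 0 := by positivity
  have h3 : ((2*n).factorial:ℝ) ≠ 0 := by positivity
  have h4 : (2*(n:ℝ)+k+2) ≠ 0 := by positivity
  have h5 : (2*(n:ℝ)+k+1+1) ≠ 0 := by positivity
  push_cast
  field_simp
  ring

lemma F0_n (n k : ℕ) : F0 (n+1) k = F0 n k *
    (((n:ℝ)+k+1)^2 * (n+1)^4 / ((2*n+k+2)^2 * (2*n+k+3)^2 * (2*n+1) * (2*n+2))) := by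
  unfold F0
  rw [show (n+1)+k = (n+k)+1 by ring, show 2*(n+1)+k+1 = (2*n+k+1)+1+1 by ring,
    show 2*(n+1) = 2*n+1+1 by ring]
  simp only [Nat.factorial_succ (n+k), Nat.factorial_succ (2*n+k+1), Nat.factorial_succ (2*n+k+1+1),
    Nat.factorial_succ n, Nat.factorial_succ (2*n), Nat.factorial_succ (2*n+1)]
  have h1 : ((n+k).factorial:ℝ) ≠ 0 := by positivity
  have h2 : ((2*n+k+1).factorial:ℝ) ≠ 0 := by positivity
  have h3 : ((2*n).factorial:ℝ) ≠ 0 := by positivity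
  have h6 : ((n).factorial:ℝ) ≠ 0 := by positivity
  have h4 : (2*(n:ℝ)+k+2) ≠ 0 := by positivity
  have h5 : (2*(n:ℝ)+k+1+1) ≠ 0 := by positivity
  have h7 : (2*(n:ℝ)+k+3) ≠ 0 := by positivity
  have h8 : (2*(n:ℝ)+k+1+1+1) ≠ 0 := by positivity
  push_cast
  rw [show 2*(n:ℝ)+k+1+1+1 = 2*n+k+3 by ring, show 2*(n:ℝ)+k+1+1 = 2*n+k+2 by ring,
    show 2*(n:ℝ)+1+1 = 2*n+2 by ring]
  field_simp

lemma wz (n k : ℕ) : ff n k - ff (n+1) k = gg n k - gg n (k+1) := by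
  unfold ff gg
  rw [F0_k, F0_n]
  have e1 : hh (n+1) k = hh n k + 1/(2*n+k+2)^2 + 1/(2*n+k+3)^2 - 3/8 * (1/((n:ℝ)+k+1)^2)
      - 11/4 * (1/((n:ℝ)+1)^2) := by
    unfold hh
    rw [show (n+1)+k = (n+k)+1 by ring, show 2*(n+1)+k+1 = (2*n+k+1)+1+1 by ring]
    simp only [H_succ (n+k), H_succ (2*n+k+1), H_succ (2*n+k+1+1), H_succ n]
    push_cast
    rw [show 2*(n:ℝ)+k+1+1+1 = 2*n+k+3 by ring, show 2*(n:ℝ)+k+1+1 = 2*n+k+2 by ring]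
    ring
  have e2 : hh n (k+1) = hh n k + 1/(2*n+k+2)^2 - 3/8 * (1/((n:ℝ)+k+1)^2) := by
    unfold hh
    rw [show n+(k+1) = (n+k)+1 by ring, show 2*n+(k+1)+1 = (2*n+k+1)+1 by ring]
    simp only [H_succ (n+k), H_succ (2*n+k+1)]
    push_cast
    rw [show 2*(n:ℝ)+k+1+1 = 2*n+k+2 by ring]
    ring
  rw [e1, e2]
  generalize hh n k = h
  generalize F0 n k = F
  push_cast
  rw [show 2*(n:ℝ)+(k+1)+2 = 2*n+k+3 by ring]
  unfold Y0 Y1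
  have h4 : (2*(n:ℝ)+k+2) ≠ 0 := by positivity
  have h7 : (2*(n:ℝ)+k+3) ≠ 0 := by positivity
  have h8 : ((n:ℝ)+k+1) ≠ 0 := by positivity
  have h9 : ((n:ℝ)+1) ≠ 0 := by positivity
  have h10 : (2*(n:ℝ)+1) ≠ 0 := by positivity
  have h11 : (2*(n:ℝ)+2) ≠ 0 := by positivity
  field_simp
  ring

lemma gg_zero (n : ℕ) : gg n 0 =
    (21 * ((n:ℝ)+1) - 8) / (((n:ℝ)+1)^3 * ((2*(n+1)).choose (n+1) : ℝ)^3) *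
        (H 2 (2*n+1) - 25/8 * H 2 n) := by
  have hc : ((2*(n+1)).choose (n+1) : ℝ) =
      ((2*n+1).factorial * (2*n+2)) / ((n+1) * (n.factorial:ℝ))^2 := by
    rw [Nat.cast_choose ℝ (by omega), show 2*(n+1)-(n+1) = n+1 by omega,
      show 2*(n+1) = 2*n+1+1 by ring, Nat.factorial_succ (2*n+1), Nat.factorial_succ n]
    push_cast
    rw [sq]
    congr 1
    ring
  rw [hc]
  unfold gg F0 hh Y0 Y1
  simp only [Nat.factorial_succ (2*n), add_zero]
  have h1 : ((n).factorial:ℝ) ≠ 0 := by positivity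
  have h3 : ((2*n).factorial:ℝ) ≠ 0 := by positivity
  have h9 : ((n:ℝ)+1) ≠ 0 := by positivity
  have h10 : (2*(n:ℝ)+1) ≠ 0 := by positivity
  have h11 : (2*(n:ℝ)+2) ≠ 0 := by positivity
  push_cast
  rw [show 2*(n:ℝ)+0+2 = 2*(n+1) by ring, show 2*(n:ℝ)+2 = 2*(n+1) by ring]
  field_simp
  ring

lemma H_nonneg (n : ℕ) : 0 ≤ H 2 n := Finset.sum_nonneg (fun _ _ => by positivity)

lemma H_le (n : ℕ) : H 2 n ≤ 2 := by
  have aux : ∀ m : ℕ, H 2 (m+1) ≤ 2 - 1/((m:ℝ)+1) := by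
    intro m
    induction m with
    | zero => simp [H]; norm_num
    | succ m ih =>
      rw [H_succ]
      have : 1/((m:ℝ)+1+1)^2 ≤ 1/((m:ℝ)+1) - 1/((m:ℝ)+1+1) := by
        rw [div_sub_div _ _ (by positivity) (by positivity),
          div_le_div_iff₀ (by positivity) (by positivity)]
        nlinarith [Nat.cast_nonneg (α := ℝ) m]
      push_cast
      linarith
  rcases n with _ | m
  · simp [H]
  · have := aux m
    have : 0 ≤ 1/((m:ℝ)+1) := by positivity
    linarith

lemma hh_abs (n k : ℕ) : |hh n k| ≤ 8 := by
  unfold hh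
  have a := H_nonneg (2*n+k+1)
  have b := H_nonneg (n+k)
  have c := H_nonneg n
  have a' := H_le (2*n+k+1)
  have b' := H_le (n+k)
  have c' := H_le n
  rw [abs_le]; constructor <;> linarith

lemma F0_nonneg (n k : ℕ) : 0 ≤ F0 n k := by unfold F0; positivity

lemma F0_le (n k : ℕ) : F0 n k ≤ 1/((k:ℝ)+1)^2 / (n+1) := by
  have h1 : (n+k).factorial * n.factorial * (k+1) ≤ (2*n+k+1).factorial := by
    have := Nat.le_of_dvd (Nat.factorial_pos _)
      (Nat.factorial_mul_factorial_dvd_factorial_add (n+k+1) n)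
    rw [show n+k+1+n = 2*n+k+1 by ring, Nat.factorial_succ] at this
    refine le_trans ?_ this
    calc _ = (k+1) * ((n+k).factorial * n.factorial) := by ring
      _ ≤ (n+k+1) * ((n+k).factorial * n.factorial) := Nat.mul_le_mul_right _ (by omega)
      _ = _ := by ring
  have h2 : n.factorial^2 * (n+1) ≤ (2*n).factorial := by
    clear h1
    induction n with
    | zero => simp
    | succ n ih =>
      rw [show 2*(n+1) = 2*n+1+1 by ring, Nat.factorial_succ (2*n+1), Nat.factorial_succ (2*n),
        Nat.factorial_succ n]
      calc _ = (n.factorial^2 * (n+1)) * ((n+1)*(n+2)) := by ring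
        _ ≤ (2*n).factorial * ((2*n+1+1)*(2*n+1)) := by
          apply Nat.mul_le_mul ih
          nlinarith
        _ = _ := by ring
  have h1' : ((n+k).factorial:ℝ) * n.factorial * (k+1) ≤ (2*n+k+1).factorial := by exact_mod_cast h1
  have h2' : (n.factorial:ℝ)^2 * (n+1) ≤ (2*n).factorial := by exact_mod_cast h2
  unfold F0
  rw [div_div, div_le_div_iff₀ (by positivity) (by positivity)]
  calc _ = (((n+k).factorial:ℝ) * n.factorial * (k+1))^2 * ((n.factorial:ℝ)^2 * (n+1)) := by ring
    _ ≤ ((2*n+k+1).factorial:ℝ)^2 * (2*n).factorial := by gcongr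
    _ = _ := by ring

lemma gg_tendsto (n : ℕ) : Tendsto (fun k => gg n k) atTop (𝓝 0) := by
  obtain ⟨C, hC⟩ : ∃ C : ℝ, ∀ k : ℕ, |gg n k| ≤ C * (1/((k:ℝ)+1)) := by
    set c : ℝ := Y0 n 1 with hc
    have hn : (0:ℝ) ≤ n := Nat.cast_nonneg n
    refine ⟨c*10 , fun k => ?_⟩
    have hk : (0:ℝ) ≤ k := Nat.cast_nonneg k
    have hY0p : 0 ≤ Y0 n k := by unfold Y0; positivity
    have k1 : (k:ℝ) ≤ (k+1)^3 := by nlinarith [pow_nonneg hk 3, pow_nonneg hk 2]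
    have k2 : (k:ℝ)^2 ≤ (k+1)^3 := by nlinarith [pow_nonneg hk 3, pow_nonneg hk 2]
    have k3 : (k:ℝ)^3 ≤ (k+1)^3 := by nlinarith [pow_nonneg hk 3, pow_nonneg hk 2]
    have k0 : (1:ℝ) ≤ (k+1)^3 := by nlinarith [pow_nonneg hk 3, pow_nonneg hk 2]
    have hY0 : Y0 n k ≤ c * (k+1)^3 := by
      have a0 : (0:ℝ) ≤ (13+60*n+102*n^2+76*n^3+21*n^4) := by positivity
      have a1 : (0:ℝ) ≤ (20+68*n+76*n^2+28*n^3) := by positivity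
      have a2 : (0:ℝ) ≤ (11+24*n+13*n^2) := by positivity
      have a3 : (0:ℝ) ≤ (2+2*n) := by positivity
      have := mul_le_mul_of_nonneg_left k0 a0
      have := mul_le_mul_of_nonneg_left k1 a1
      have := mul_le_mul_of_nonneg_left k2 a2
      have := mul_le_mul_of_nonneg_left k3 a3
      rw [hc]; unfold Y0; linarith
    have hY1 : |Y1 n k| ≤ Y0 n k := by
      unfold Y1 Y0
      have : (0:ℝ) ≤ n*k := by positivity
      have : (0:ℝ) ≤ n^2*k := by positivity
      have : (0:ℝ) ≤ n^3*k := by positivity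
      have : (0:ℝ) ≤ n*k^2 := by positivity
      have : (0:ℝ) ≤ n^2*k^2 := by positivity
      have : (0:ℝ) ≤ k^3 := by positivity
      have : (0:ℝ) ≤ n*k^3 := by positivity
      have : (0:ℝ) ≤ n^2 := by positivity
      have : (0:ℝ) ≤ n^3 := by positivity
      have : (0:ℝ) ≤ n^4 := by positivity
      have : (0:ℝ) ≤ k^2 := by positivity
      rw [abs_le]; constructor <;> linarith
    have hY2 : Y0 n k / (2*n+k+2)^2 ≤ Y0 n k := by
      apply div_le_self hY0p
      nlinarith
    have hY2p : 0 ≤ Y0 n k / (2*n+k+2)^2 := by positivity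
    have hb : |Y0 n k * hh n k + Y1 n k + Y0 n k / (2*n+k+2)^2| ≤ 10 * Y0 n k := by
      have h1 : |Y0 n k * hh n k| ≤ 8 * Y0 n k := by
        rw [abs_mul, abs_of_nonneg hY0p, mul_comm]
        exact mul_le_mul_of_nonneg_right (hh_abs n k) hY0p
      rw [abs_le] at *
      constructor <;> linarith [h1.1, h1.2, hY1.1, hY1.2]
    have hF : F0 n k / ((2*n+1)*(2*n+2)*(2*n+k+2)^2) ≤ 1/((k:ℝ)+1)^4 := by
      have h1 : F0 n k ≤ 1/((k:ℝ)+1)^2 := (F0_le n k).trans (div_le_self (by positivity) (by linarith))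
      have h2 : ((k:ℝ)+1)^2 ≤ (2*n+1)*(2*n+2)*(2*n+k+2)^2 := by
        have : ((k:ℝ)+1)^2 ≤ (2*n+k+2)^2 := by gcongr <;> linarith
        have h3 : (1:ℝ) ≤ (2*n+1)*(2*n+2) := by nlinarith
        nlinarith [sq_nonneg (2*(n:ℝ)+k+2)]
      calc _ ≤ (1/((k:ℝ)+1)^2) / ((k:ℝ)+1)^2 := by gcongr
        _ = _ := by field_simp
    unfold gg
    have hFp : 0 ≤ F0 n k / ((2*n+1)*(2*n+2)*(2*n+k+2)^2) := by
      have := F0_nonneg n k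
      positivity
    rw [abs_mul, abs_of_nonneg hFp]
    calc _ ≤ (1/((k:ℝ)+1)^4) * (10 * (c * (k+1)^3)) := by
          apply mul_le_mul hF (hb.trans (by linarith)) (abs_nonneg _) (by positivity)
      _ = _ := by field_simp
  apply squeeze_zero_norm hC
  simpa using (tendsto_one_div_add_atTop_nhds_zero_nat (𝕜 := ℝ)).const_mul C

lemma sum_f0 (K : ℕ) : ∑ k ∈ Finset.range K, ff 0 k =
    5/16 * (H 2 K)^2 + 11/16 * H 4 K := by
  induction K with
  | zero => simp [H]
  | succ K ih =>
    have h4 : H 4 (K+1) = H 4 K + 1 / ((K:ℝ)+1)^4 := by simp [H, Finset.sum_range_succ]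
    rw [Finset.sum_range_succ, ih, h4, H_succ]
    unfold ff F0 hh
    have h0 : H 2 0 = 0 := by simp [H]
    have h1 : ((K).factorial:ℝ) ≠ 0 := by positivity
    simp only [Nat.mul_zero, Nat.zero_add, h0, H_succ, Nat.factorial_succ, Nat.factorial_zero]
    push_cast
    field_simp
    ring

lemma sum_f0_lim : Tendsto (fun K => ∑ k ∈ Finset.range K, ff 0 k) atTop
    (𝓝 (47 * Real.pi^4 / 2880)) := by
  have key : ∀ s : ℕ, s ≠ 0 → ∀ L : ℝ, HasSum (fun n : ℕ => 1 / (n:ℝ)^s) L →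
      Tendsto (fun K => H s K) atTop (𝓝 L) := by
    intro s hs L hL
    have := (hasSum_nat_add_iff' (f := fun n : ℕ => 1 / (n:ℝ)^s) 1).mpr hL
    have := this.tendsto_sum_nat
    simpa [H, hs] using this
  have h2 := key 2 (by norm_num) _ hasSum_zeta_two
  have h4 := key 4 (by norm_num) _ hasSum_zeta_four
  simp_rw [sum_f0]
  convert ((h2.pow 2).const_mul (5/16)).add (h4.const_mul (11/16)) using 2
  ring

lemma grid (N K : ℕ) : ∑ n ∈ Finset.range N, gg n 0 - ∑ n ∈ Finset.range N, gg n K =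
    ∑ k ∈ Finset.range K, ff 0 k - ∑ k ∈ Finset.range K, ff N k := by
  rw [← Finset.sum_sub_distrib, ← Finset.sum_sub_distrib]
  have e1 : ∀ n, gg n 0 - gg n K = ∑ k ∈ Finset.range K, (gg n k - gg n (k+1)) := fun n =>
    (Finset.sum_range_sub' _ _).symm
  have e2 : ∀ k, ff 0 k - ff N k = ∑ n ∈ Finset.range N, (ff n k - ff (n+1) k) := fun k =>
    (Finset.sum_range_sub' (fun n => ff n k) _).symm
  simp_rw [e1, e2, wz]
  exact Finset.sum_comm

lemma f_bound (N K : ℕ) : |∑ k ∈ Finset.range K, ff N k| ≤ 16 * (1/((N:ℝ)+1)) := by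
  calc _ ≤ ∑ k ∈ Finset.range K, |ff N k| := Finset.abs_sum_le_sum_abs _ _
    _ ≤ ∑ k ∈ Finset.range K, (1/((k:ℝ)+1)^2) * (8 * (1/((N:ℝ)+1))) := by
      apply Finset.sum_le_sum
      intro k _
      unfold ff
      rw [abs_mul, abs_of_nonneg (F0_nonneg N k)]
      calc _ ≤ 1/((k:ℝ)+1)^2 / (N+1) * 8 :=
            mul_le_mul (F0_le N k) (hh_abs N k) (abs_nonneg _) (by positivity)
        _ = _ := by ring
    _ = H 2 K * (8 * (1/((N:ℝ)+1))) := by rw [← Finset.sum_mul]; rfl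
    _ ≤ 2 * (8 * (1/((N:ℝ)+1))) := mul_le_mul_of_nonneg_right (H_le K) (by positivity)
    _ = _ := by ring

theorem stmt_2 :
    Tendsto (fun N => ∑ n ∈ Finset.range N,
      (21 * ((n:ℝ)+1) - 8) / (((n:ℝ)+1)^3 * ((2*(n+1)).choose (n+1) : ℝ)^3) *
        (H 2 (2*n+1) - 25/8 * H 2 n))
      atTop (𝓝 (47 * Real.pi^4 / 2880)) := by
  simp_rw [← gg_zero]
  rw [tendsto_iff_norm_sub_tendsto_zero]
  have hb : ∀ N : ℕ, ‖∑ n ∈ Finset.range N, gg n 0 - 47 * Real.pi^4 / 2880‖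
      ≤ 16 * (1/((N:ℝ)+1)) := by
    intro N
    have t1 : Tendsto (fun K => ∑ n ∈ Finset.range N, gg n K) atTop (𝓝 0) := by
      simpa using tendsto_finsetSum (Finset.range N) (fun n _ => gg_tendsto n)
    have t2 := (((tendsto_const_nhds (x := ∑ n ∈ Finset.range N, gg n 0)).sub t1).sub sum_f0_lim).norm
    rw [sub_zero] at t2
    refine le_of_tendsto t2 (Eventually.of_forall fun K => ?_)
    rw [grid, sub_sub_cancel_left, norm_neg]
    exact f_bound N K
  refine squeeze_zero (fun _ => norm_nonneg _) hb ?_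
  simpa using (tendsto_one_div_add_atTop_nhds_zero_nat (𝕜 := ℝ)).const_mul 16
end

section
/- $\sum_{n=1}^{\infty} \frac{(3n-1)\,16^n}{n^3 \binom{2n}{n}^3}\left(H_{2n-1}^{(2)} - \frac{5}{4} H_{n-1}^{(2)}\right) = \frac{\pi^4}{24}$. -/
open Filter Topology

noncomputable def wa : ℕ → ℕ → ℝ
  | 0, k => 1 / (2*(k:ℝ)+1)^2
  | n+1, k => wa n k * (2*((n:ℝ)+1)^3 / ((2*(n:ℝ)+1) * (2*(k:ℝ)+2*n+3)^2))

noncomputable def we : ℕ → ℕ → ℝ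
  | 0, k => 1 / (2*(k:ℝ)+1)^2
  | n+1, k => we n k - 1/((n:ℝ)+1)^2 + 1/(2*(k:ℝ)+2*n+3)^2

noncomputable def wg (n k : ℕ) : ℝ :=
  wa n k * we n k * ((2*(k:ℝ)+3*n+2) / (2*(2*(n:ℝ)+1)))

lemma wa_shift (n k : ℕ) : wa n (k+1) = wa n k * ((2*(k:ℝ)+1)^2 / (2*(k:ℝ)+2*n+3)^2) := by
  induction n with
  | zero =>
    simp only [wa]; push_cast
    have h1 : 2*(k:ℝ)+1 ≠ 0 := by positivity
    have h2 : 2*(k:ℝ)+3 ≠ 0 := by positivity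
    have h3 : 2*((k:ℝ)+1)+1 = 2*k+3 := by ring
    rw [h3, mul_zero, add_zero]; field_simp
  | succ n ih =>
    simp only [wa, ih]; push_cast
    have h1 : 2*(k:ℝ)+1 ≠ 0 := by positivity
    have h2 : 2*(k:ℝ)+2*n+3 ≠ 0 := by positivity
    have h4 : 2*(k:ℝ)+2*n+5 ≠ 0 := by positivity
    have h5 : 2*(n:ℝ)+1 ≠ 0 := by positivity
    have e1 : 2*((k:ℝ)+1)+2*n+3 = 2*k+2*n+5 := by ring
    have e2 : 2*(k:ℝ)+2*(n+1)+3 = 2*k+2*n+5 := by ring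
    rw [e1, e2]; field_simp

lemma we_shift (n k : ℕ) : we n (k+1) = we n k - 1/(2*(k:ℝ)+1)^2 + 1/(2*(k:ℝ)+2*n+3)^2 := by
  induction n with
  | zero =>
    simp only [we]; push_cast
    have h3 : 2*((k:ℝ)+1)+1 = 2*k+3 := by ring
    rw [h3, mul_zero, add_zero]; ring
  | succ n ih =>
    simp only [we, ih]; push_cast
    have e1 : 2*((k:ℝ)+1)+2*n+3 = 2*k+2*n+5 := by ring
    have e2 : 2*(k:ℝ)+2*(n+1)+3 = 2*k+2*n+5 := by ring
    rw [e1, e2]; ring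

lemma wz_s3 (n k : ℕ) : wa n k * we n k - wa (n+1) k * we (n+1) k = wg n k - wg n (k+1) := by
  simp only [wg, wa_shift, we_shift, wa, we]; push_cast
  have h1 : 2*(k:ℝ)+1 ≠ 0 := by positivity
  have h2 : 2*(k:ℝ)+2*n+3 ≠ 0 := by positivity
  have h5 : 2*(n:ℝ)+1 ≠ 0 := by positivity
  have h6 : (n:ℝ)+1 ≠ 0 := by positivity
  field_simp
  ring

lemma wz_sum (N K : ℕ) : ∑ n ∈ Finset.range N, wg n 0 =
    ∑ k ∈ Finset.range K, 1/(2*(k:ℝ)+1)^4 - ∑ k ∈ Finset.range K, wa N k * we N k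
      + ∑ n ∈ Finset.range N, wg n K := by
  have h0 : ∀ k : ℕ, 1/(2*(k:ℝ)+1)^4 = wa 0 k * we 0 k := by
    intro k; simp only [wa, we]
    have h1 : 2*(k:ℝ)+1 ≠ 0 := by positivity
    field_simp
  simp only [h0]
  induction N with
  | zero => simp
  | succ N ih =>
    rw [Finset.sum_range_succ, Finset.sum_range_succ, ih]
    have h : ∑ k ∈ Finset.range K, (wa N k * we N k - wa (N+1) k * we (N+1) k)
        = wg N 0 - wg N K := by
      simp only [wz_s3]; exact Finset.sum_range_sub' _ _
    rw [Finset.sum_sub_distrib] at h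
    linarith

lemma wa_nonneg (n k : ℕ) : 0 ≤ wa n k := by
  induction n with
  | zero => simp only [wa]; positivity
  | succ n ih => simp only [wa]; positivity

lemma wa_le (n k : ℕ) : wa n k ≤ (1/2)^n * (1/(2*(k:ℝ)+1)^2) := by
  induction n with
  | zero => simp [wa]
  | succ n ih =>
    simp only [wa]
    have h : 2*((n:ℝ)+1)^3 / ((2*(n:ℝ)+1) * (2*(k:ℝ)+2*n+3)^2) ≤ 1/2 := by
      have hn : (0:ℝ) ≤ n := by positivity
      have hk : (0:ℝ) ≤ k := by positivity
      rw [div_le_div_iff₀ (by positivity) (by norm_num)]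
      have h1 : (2*(n:ℝ)+3)^2 ≤ (2*(k:ℝ)+2*n+3)^2 := by gcongr; linarith
      have h2 := mul_le_mul_of_nonneg_left h1 (by positivity : 0 ≤ 2*(n:ℝ)+1)
      have h3 : 0 ≤ (n:ℝ)^3 := by positivity
      have h4 : 0 ≤ (n:ℝ)^2 := by positivity
      nlinarith
    calc _ ≤ ((1/2)^n * (1/(2*(k:ℝ)+1)^2)) * (1/2) := by
          apply mul_le_mul ih h (by positivity) (by positivity)
      _ = _ := by ring

lemma we_abs (n k : ℕ) : -(n:ℝ) ≤ we n k ∧ we n k ≤ n + 1 := by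
  induction n with
  | zero =>
    simp only [we]; push_cast
    refine ⟨by simp; positivity, ?_⟩
    rw [zero_add, div_le_one (by positivity)]
    apply one_le_pow₀; linarith [(by positivity : (0:ℝ) ≤ k)]
  | succ n ih =>
    simp only [we]; push_cast
    have hn : (0:ℝ) ≤ n := by positivity
    have hk : (0:ℝ) ≤ k := by positivity
    have a1 : 1/((n:ℝ)+1)^2 ≤ 1 := by
      rw [div_le_one (by positivity)]; apply one_le_pow₀; linarith
    have a2 : 1/(2*(k:ℝ)+2*n+3)^2 ≤ 1 := by
      rw [div_le_one (by positivity)]; apply one_le_pow₀; linarith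
    have a3 : 0 ≤ 1/((n:ℝ)+1)^2 := by positivity
    have a4 : 0 ≤ 1/(2*(k:ℝ)+2*n+3)^2 := by positivity
    constructor <;> linarith [ih.1, ih.2]

lemma wD_abs (n k : ℕ) : |wa n k * we n k| ≤ ((n:ℝ)+1) * (1/2)^n * (1/(2*(k:ℝ)+1)^2) := by
  rw [abs_mul, abs_of_nonneg (wa_nonneg n k)]
  have h : |we n k| ≤ n + 1 := abs_le.2 ⟨by linarith [(we_abs n k).1], (we_abs n k).2⟩
  calc _ ≤ ((1/2)^n * (1/(2*(k:ℝ)+1)^2)) * ((n:ℝ)+1) :=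
        mul_le_mul (wa_le n k) h (abs_nonneg _) (by positivity)
    _ = _ := by ring

lemma sum_sq_le (K : ℕ) : ∑ k ∈ Finset.range K, 1/(2*(k:ℝ)+1)^2 ≤ 3 - 3/(2*(K:ℝ)+1) := by
  induction K with
  | zero => simp
  | succ K ih =>
    rw [Finset.sum_range_succ]; push_cast
    have h : 1/(2*(K:ℝ)+1)^2 ≤ 3/(2*(K:ℝ)+1) - 3/(2*((K:ℝ)+1)+1) := by
      have hk : (0:ℝ) ≤ K := by positivity
      rw [div_sub_div _ _ (by positivity) (by positivity),
        div_le_div_iff₀ (by positivity) (by positivity)]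
      nlinarith [mul_nonneg hk hk, mul_nonneg hk (mul_nonneg hk hk)]
    linarith

lemma wD_sum_abs (N K : ℕ) :
    |∑ k ∈ Finset.range K, wa N k * we N k| ≤ 3 * (((N:ℝ)+1) * (1/2)^N) := by
  calc _ ≤ ∑ k ∈ Finset.range K, |wa N k * we N k| := Finset.abs_sum_le_sum_abs _ _
    _ ≤ ∑ k ∈ Finset.range K, ((N:ℝ)+1) * (1/2)^N * (1/(2*(k:ℝ)+1)^2) :=
        Finset.sum_le_sum fun k _ => wD_abs N k
    _ = ((N:ℝ)+1) * (1/2)^N * ∑ k ∈ Finset.range K, (1/(2*(k:ℝ)+1)^2) := by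
        rw [Finset.mul_sum]
    _ ≤ ((N:ℝ)+1) * (1/2)^N * 3 := by
        have : 0 ≤ 3/(2*(K:ℝ)+1) := by positivity
        apply mul_le_mul_of_nonneg_left _ (by positivity)
        linarith [sum_sq_le K]
    _ = _ := by ring

lemma wg_tendsto (n : ℕ) : Tendsto (fun K => wg n K) atTop (𝓝 0) := by
  have hb : ∀ K : ℕ, |wg n K| ≤ (((n:ℝ)+1) * (1/2)^n * (3*n+2)) * (1/((K:ℝ)+1)) := by
    intro K
    have hn : (0:ℝ) ≤ n := by positivity
    have hk : (0:ℝ) ≤ K := by positivity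
    rw [wg, abs_mul, abs_of_nonneg (by positivity : 0 ≤ (2*(K:ℝ)+3*n+2) / (2*(2*(n:ℝ)+1)))]
    have h1 : (2*(K:ℝ)+3*n+2) / (2*(2*(n:ℝ)+1)) ≤ (3*n+2) * (K+1) := by
      rw [div_le_iff₀ (by positivity)]
      have := mul_nonneg hn hk
      nlinarith [mul_nonneg hn this, mul_nonneg hn hn]
    calc _ ≤ (((n:ℝ)+1) * (1/2)^n * (1/(2*(K:ℝ)+1)^2)) * ((3*n+2) * (K+1)) :=
          mul_le_mul (wD_abs n K) h1 (by positivity) (by positivity)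
      _ = (((n:ℝ)+1) * (1/2)^n * (3*n+2)) * (((K:ℝ)+1)/(2*(K:ℝ)+1)^2) := by ring
      _ ≤ _ := by
          apply mul_le_mul_of_nonneg_left _ (by positivity)
          rw [div_le_div_iff₀ (by positivity) (by positivity)]
          nlinarith [mul_nonneg hk hk]
  apply squeeze_zero_norm hb
  simpa using (tendsto_one_div_add_atTop_nhds_zero_nat (𝕜 := ℝ)).const_mul
    (((n:ℝ)+1) * (1/2)^n * (3*n+2))

lemma odd_four : HasSum (fun k : ℕ => 1/(2*(k:ℝ)+1)^4) (Real.pi^4/96) := by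
  have h := hasSum_zeta_four
  have he : HasSum (fun k : ℕ => 1/(((2*k : ℕ):ℝ))^4) (1/16 * (Real.pi^4/90)) := by
    have e : (fun k : ℕ => 1/(((2*k : ℕ):ℝ))^4) = fun k : ℕ => 1/16 * (1/(k:ℝ)^4) := by
      funext k
      push_cast; rw [mul_pow]; ring
    rw [e]; exact h.mul_left (1/16)
  have hs : Summable (fun k : ℕ => 1/(((2*k+1 : ℕ):ℝ))^4) :=
    h.summable.comp_injective (i := fun k : ℕ => 2*k+1) (fun a b hab => by simpa using hab)
  have h2 := HasSum.even_add_odd (f := fun n : ℕ => 1/(n:ℝ)^4) he hs.hasSum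
  have := h2.unique h
  have h3 := hs.hasSum
  rw [show (∑' k : ℕ, 1/(((2*k+1 : ℕ):ℝ))^4) = Real.pi^4/96 by linarith] at h3
  simpa using h3

lemma wg_bound (N : ℕ) :
    |∑ n ∈ Finset.range N, wg n 0 - Real.pi^4/96| ≤ 3 * (((N:ℝ)+1) * (1/2)^N) := by
  have h1 := odd_four.tendsto_sum_nat
  have h2 : Tendsto (fun K => ∑ n ∈ Finset.range N, wg n K) atTop (𝓝 0) := by
    simpa using tendsto_finsetSum (Finset.range N) (fun n _ => wg_tendsto n)
  have h3 : Tendsto (fun K => |∑ n ∈ Finset.range N, wg n 0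
      - (∑ k ∈ Finset.range K, 1/(2*(k:ℝ)+1)^4) - ∑ n ∈ Finset.range N, wg n K|) atTop
      (𝓝 |∑ n ∈ Finset.range N, wg n 0 - Real.pi^4/96 - 0|) :=
    ((tendsto_const_nhds.sub h1).sub h2).abs
  rw [sub_zero] at h3
  refine le_of_tendsto' h3 fun K => ?_
  have := wD_sum_abs N K
  have e := wz_sum N K
  rw [← abs_neg] at this
  refine le_of_eq_of_le (congrArg _ ?_) this
  linarith

lemma wg_sum_tendsto :
    Tendsto (fun N => ∑ n ∈ Finset.range N, wg n 0) atTop (𝓝 (Real.pi^4/96)) := by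
  rw [tendsto_iff_norm_sub_tendsto_zero]
  refine squeeze_zero (fun _ => norm_nonneg _) (fun N => wg_bound N) ?_
  have h1 := tendsto_self_mul_const_pow_of_lt_one (r := (1/2:ℝ)) (by norm_num) (by norm_num)
  have h2 := tendsto_pow_atTop_nhds_zero_of_lt_one (r := (1/2:ℝ)) (by norm_num) (by norm_num)
  have := (h1.add h2).const_mul 3
  simp only [add_zero, mul_zero] at this
  refine this.congr fun N => ?_
  ring

lemma we_zero (n : ℕ) : we n 0 = H 2 (2*n+1) - 5/4 * H 2 n := by
  induction n with
  | zero => simp [we, H]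
  | succ n ih =>
    have e : 2*(n+1)+1 = 2*n+1+1+1 := by ring
    rw [e]
    simp only [H] at ih ⊢
    rw [Finset.sum_range_succ, Finset.sum_range_succ, Finset.sum_range_succ _ n]
    simp only [we, ih]; push_cast
    have h5 : 2*(n:ℝ)+3 ≠ 0 := by positivity
    have h6 : (n:ℝ)+1 ≠ 0 := by positivity
    have e1 : 2*(n:ℝ)+1+1 = 2*(n+1) := by ring
    have e2 : 2*(n:ℝ)+2+1 = 2*n+3 := by ring
    have e3 : 2*(0:ℝ)+2*n+3 = 2*n+3 := by ring
    rw [e2, e3, e1, mul_pow]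
    field_simp
    ring

lemma wa_zero (n : ℕ) : wa n 0 =
    8 * 16^n * (2*(n:ℝ)+1) / (((n:ℝ)+1)^3 * ((2*(n+1)).choose (n+1) : ℝ)^3) := by
  induction n with
  | zero => norm_num [wa]
  | succ n ih =>
    have hc := Nat.succ_mul_centralBinom_succ (n+1)
    have hp := Nat.centralBinom_pos (n+1)
    simp only [Nat.centralBinom] at hc hp
    have hc' : ((n:ℝ)+2) * ((2*(n+1+1)).choose (n+1+1) : ℝ)
        = 2*(2*n+3) * ((2*(n+1)).choose (n+1) : ℝ) := by
      have := congrArg (Nat.cast (R := ℝ)) hc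
      push_cast at this
      linear_combination this
    have hp' : (0:ℝ) < ((2*(n+1)).choose (n+1) : ℝ) := by exact_mod_cast hp
    simp only [wa, ih]
    have e : (((n+1:ℕ):ℝ)+1)^3 * ((2*(n+1+1)).choose (n+1+1) : ℝ)^3
        = (2*(2*n+3) * ((2*(n+1)).choose (n+1) : ℝ))^3 := by
      rw [← hc']; push_cast; ring
    rw [e]
    generalize ((2*(n+1)).choose (n+1) : ℝ) = c at *
    push_cast
    have h5 : 2*(n:ℝ)+3 ≠ 0 := by positivity
    have h6 : (n:ℝ)+1 ≠ 0 := by positivity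
    have h7 : 2*(n:ℝ)+1 ≠ 0 := by positivity
    have e3 : 2*(0:ℝ)+2*n+3 = 2*n+3 := by ring
    have e4 : 2*((n:ℝ)+1)+1 = 2*n+3 := by ring
    rw [e3, e4]
    field_simp
    ring

theorem stmt_3 :
    Tendsto (fun N => ∑ n ∈ Finset.range N,
      ((3 * ((n:ℝ)+1) - 1) * 16^(n+1)) / (((n:ℝ)+1)^3 * ((2*(n+1)).choose (n+1) : ℝ)^3) *
        (H 2 (2*n+1) - 5/4 * H 2 n))
      atTop (𝓝 (Real.pi^4 / 24)) := by
  have h := wg_sum_tendsto.const_mul 4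
  rw [show 4 * (Real.pi^4/96) = Real.pi^4/24 by ring] at h
  refine h.congr fun N => ?_
  rw [Finset.mul_sum]
  refine Finset.sum_congr rfl fun n _ => ?_
  rw [wg, wa_zero, we_zero]
  have hp : (0:ℝ) < ((2*(n+1)).choose (n+1) : ℝ) := by
    exact_mod_cast Nat.centralBinom_pos (n+1)
  generalize ((2*(n+1)).choose (n+1) : ℝ) = c at *
  generalize H 2 (2*n+1) - 5/4 * H 2 n = y
  have h6 : (n:ℝ)+1 ≠ 0 := by positivity
  have h7 : 2*(n:ℝ)+1 ≠ 0 := by positivity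
  push_cast
  field_simp
  ring
end

section
/- $\sum_{n\geq 0} \frac{\binom{2n}{n}}{(2n+1)^2 (-16)^n}\left(5 \sum_{j=0}^{n} \frac{1}{(2j+1)^3} + \frac{1}{(2n+1)^3}\right) = \frac{\pi^2}{2}\,\zeta(3)$. -/
open Filter Topology

/-- The Riemann zeta value `ζ(s) = ∑_{n ≥ 1} 1/n^s`. -/
noncomputable def zeta (s : ℕ) : ℝ := ∑' n : ℕ, 1 / ((n:ℝ) + 1) ^ s

namespace WZ

/-- Normalised central binomial coefficient. -/
noncomputable def c (n : ℕ) : ℝ := (n.centralBinom : ℝ) / 16 ^ n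

noncomputable def r (k : ℕ) : ℝ := 2 * ∏ j ∈ Finset.range k, (((j:ℝ) + 1) / ((j:ℝ) + 3 / 2))

noncomputable def q (n k : ℕ) : ℝ :=
  ∏ j ∈ Finset.range n, (((j:ℝ) + 1 / 2) / ((j:ℝ) + k + 3 / 2))

noncomputable def A (n k : ℕ) : ℝ := (-1) ^ n * c n * r k ^ 4 * q n k ^ 4

noncomputable def H (n k : ℕ) : ℝ :=
  (∑ j ∈ Finset.range k, 1 / ((j:ℝ) + 1) ^ 3)
    + ∑ j ∈ Finset.range (n + k + 1), 1 / ((j:ℝ) + 1 / 2) ^ 3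

noncomputable def P (n k : ℕ) : ℝ :=
  (k:ℝ) ^ 2 + 3 * ((n:ℝ) + 1 / 2) * k + 5 / 2 * ((n:ℝ) + 1 / 2) ^ 2

noncomputable def F (n k : ℕ) : ℝ := 2 * n * (2 * k + n + 3 / 2) * A n k * H n k

noncomputable def G (n k : ℕ) : ℝ := A n k * (P n k * H n k + 1 / (2 * ((n:ℝ) + 1 / 2)))

lemma c_succ (n : ℕ) : c (n + 1) = c n * (((n:ℝ) + 1 / 2) / (4 * ((n:ℝ) + 1))) := by
  have h : ((n:ℝ) + 1) * ((n + 1).centralBinom : ℝ) = 2 * (2 * n + 1) * (n.centralBinom : ℝ) := by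
    exact_mod_cast Nat.succ_mul_centralBinom_succ n
  have hn : (n:ℝ) + 1 ≠ 0 := by positivity
  have h' : ((n + 1).centralBinom : ℝ) = 2 * (2 * n + 1) * (n.centralBinom : ℝ) / ((n:ℝ) + 1) := by
    rw [eq_div_iff hn, ← h]; ring
  unfold c
  rw [h', pow_succ]
  field_simp
  ring

lemma c_nonneg (n : ℕ) : 0 ≤ c n := by unfold c; positivity

lemma c_le (n : ℕ) : c n ≤ (1 / 4) ^ n := by
  induction n with
  | zero => simp [c]
  | succ n ih =>
    rw [c_succ, pow_succ]
    have h : ((n:ℝ) + 1 / 2) / (4 * ((n:ℝ) + 1)) ≤ 1 / 4 := by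
      rw [div_le_div_iff₀ (by positivity) (by positivity)]; linarith
    exact mul_le_mul ih h (by positivity) (by positivity)

lemma r_succ (k : ℕ) : r (k + 1) = r k * (((k:ℝ) + 1) / ((k:ℝ) + 3 / 2)) := by
  unfold r; rw [Finset.prod_range_succ]; ring

lemma r_nonneg (k : ℕ) : 0 ≤ r k := by
  unfold r
  have : 0 ≤ ∏ j ∈ Finset.range k, (((j:ℝ) + 1) / ((j:ℝ) + 3 / 2)) :=
    Finset.prod_nonneg fun j _ => by positivity
  positivity

lemma r_sq_le (k : ℕ) : r k ^ 2 * ((k:ℝ) + 1) ≤ 4 := by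
  induction k with
  | zero => norm_num [r]
  | succ k ih =>
    rw [r_succ]
    refine le_trans ?_ ih
    push_cast
    have h : (((k:ℝ) + 1) / ((k:ℝ) + 3 / 2)) ^ 2 * ((k:ℝ) + 1 + 1) ≤ (k:ℝ) + 1 := by
      rw [div_pow, div_mul_eq_mul_div, div_le_iff₀ (by positivity)]
      have : (0:ℝ) ≤ k := by positivity
      nlinarith
    calc _ = r k ^ 2 * ((((k:ℝ) + 1) / ((k:ℝ) + 3 / 2)) ^ 2 * ((k:ℝ) + 1 + 1)) := by ring
      _ ≤ _ := mul_le_mul_of_nonneg_left h (by positivity)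

lemma r_four_le (k : ℕ) : r k ^ 4 * ((k:ℝ) + 1) ^ 2 ≤ 16 := by
  have h := r_sq_le k
  have h0 : 0 ≤ r k ^ 2 * ((k:ℝ) + 1) := by positivity
  nlinarith

lemma r_wallis (k : ℕ) : r k ^ 2 * ((k:ℝ) + 1 / 2) = 2 * Real.Wallis.W k := by
  induction k with
  | zero => norm_num [r, Real.Wallis.W]
  | succ k ih =>
    rw [r_succ, Real.Wallis.W_succ]
    have e : 2 * (Real.Wallis.W k * ((2 * k + 2) / (2 * k + 1) * ((2 * k + 2) / (2 * k + 3))))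
      = (2 * Real.Wallis.W k) * ((2 * k + 2) / (2 * k + 1) * ((2 * k + 2) / (2 * k + 3))) := by ring
    rw [e, ← ih]
    push_cast
    have h1 : (2 * (k:ℝ) + 1) ≠ 0 := by positivity
    have h2 : (2 * (k:ℝ) + 3) ≠ 0 := by positivity
    have e1 : (k:ℝ) + 1 / 2 = (2 * k + 1) / 2 := by ring
    have e2 : (k:ℝ) + 3 / 2 = (2 * k + 3) / 2 := by ring
    have e3 : (k:ℝ) + 1 + 1 / 2 = (2 * k + 3) / 2 := by ring
    rw [e1, e2, e3]
    field_simp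

lemma q_succ (n k : ℕ) : q (n + 1) k = q n k * (((n:ℝ) + 1 / 2) / ((n:ℝ) + k + 3 / 2)) := by
  unfold q; rw [Finset.prod_range_succ]

lemma q_succ_right (n k : ℕ) :
    q n (k + 1) = q n k * (((k:ℝ) + 3 / 2) / ((n:ℝ) + k + 3 / 2)) := by
  induction n with
  | zero =>
    have : (k:ℝ) + 3 / 2 ≠ 0 := by positivity
    simp [q, this]
  | succ n ih =>
    rw [q_succ, q_succ, ih]
    push_cast
    have h1 : (n:ℝ) + k + 3 / 2 ≠ 0 := by positivity
    have h2 : (n:ℝ) + 1 + k + 3 / 2 ≠ 0 := by positivity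
    have e : (n:ℝ) + (k + 1) + 3 / 2 = n + 1 + k + 3 / 2 := by ring
    rw [e]
    field_simp

lemma q_nonneg (n k : ℕ) : 0 ≤ q n k :=
  Finset.prod_nonneg fun j _ => by positivity

lemma q_le_one (n k : ℕ) : q n k ≤ 1 := by
  refine Finset.prod_le_one (fun j _ => by positivity) fun j _ => ?_
  rw [div_le_one (by positivity)]
  have : (0:ℝ) ≤ k := by positivity
  linarith

lemma q_le (n k : ℕ) : q (n + 1) k ≤ 1 / ((k:ℝ) + 1) := by
  induction n with
  | zero =>
    simp only [q, zero_add, Finset.prod_range_one, Nat.cast_zero]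
    rw [div_le_div_iff₀ (by positivity) (by positivity)]
    have : (0:ℝ) ≤ k := by positivity
    linarith
  | succ n ih =>
    rw [q_succ]
    refine le_trans (mul_le_of_le_one_right (q_nonneg _ _) ?_) ih
    rw [div_le_one (by positivity)]
    have : (0:ℝ) ≤ k := by positivity
    linarith

lemma q_zero_right (n : ℕ) : q n 0 = 1 / (2 * (n:ℝ) + 1) := by
  induction n with
  | zero => simp [q]
  | succ n ih =>
    rw [q_succ, ih]
    have h1 : (2 * (n:ℝ) + 1) ≠ 0 := by positivity
    have h2 : (2 * (n:ℝ) + 3) ≠ 0 := by positivity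
    have e1 : (n:ℝ) + 1 / 2 = (2 * n + 1) / 2 := by ring
    have e2 : (n:ℝ) + (0:ℕ) + 3 / 2 = (2 * n + 3) / 2 := by push_cast; ring
    have e3 : 2 * ((n + 1 : ℕ):ℝ) + 1 = 2 * n + 3 := by push_cast; ring
    rw [e1, e2, e3]
    field_simp

lemma H_succ (n k : ℕ) : H (n + 1) k = H n k + 1 / ((n:ℝ) + k + 3 / 2) ^ 3 := by
  unfold H
  rw [show n + 1 + k + 1 = (n + k + 1) + 1 by ring, Finset.sum_range_succ _ (n + k + 1)]
  push_cast
  rw [show (n:ℝ) + k + 1 + 1 / 2 = n + k + 3 / 2 by ring]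
  ring

lemma H_succ_right (n k : ℕ) :
    H n (k + 1) = H n k + 1 / ((k:ℝ) + 1) ^ 3 + 1 / ((n:ℝ) + k + 3 / 2) ^ 3 := by
  unfold H
  rw [show n + (k + 1) + 1 = (n + k + 1) + 1 by ring, Finset.sum_range_succ _ (n + k + 1),
    Finset.sum_range_succ _ k]
  push_cast
  rw [show (n:ℝ) + k + 1 + 1 / 2 = n + k + 3 / 2 by ring]
  ring

lemma H_zero (k : ℕ) : H 0 k = 8 * ∑ i ∈ Finset.range (2 * k + 1), 1 / ((i:ℝ) + 1) ^ 3 := by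
  induction k with
  | zero => norm_num [H]
  | succ k ih =>
    rw [H_succ_right, ih, show 2 * (k + 1) + 1 = 2 * k + 1 + 1 + 1 by ring,
      Finset.sum_range_succ _ (2 * k + 1 + 1), Finset.sum_range_succ _ (2 * k + 1)]
    push_cast
    have h1 : (k:ℝ) + 1 ≠ 0 := by positivity
    have h2 : (2 * (k:ℝ) + 3) ≠ 0 := by positivity
    rw [show (0:ℝ) + k + 3 / 2 = (2 * k + 3) / 2 by ring,
      show 2 * (k:ℝ) + 1 + 1 = 2 * (k + 1) by ring,
      show 2 * ((k:ℝ) + 1) + 1 = 2 * k + 3 by ring, mul_add, mul_add, div_pow, mul_pow]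
    field_simp
    ring

lemma summable_zeta : Summable fun n : ℕ => 1 / ((n:ℝ) + 1) ^ 3 := by
  have := (summable_nat_add_iff 1).2 (Real.summable_one_div_nat_pow.2 (by norm_num : 1 < 3))
  simpa using this

lemma H_nonneg (n k : ℕ) : 0 ≤ H n k := by unfold H; positivity

lemma H_le (n k : ℕ) : H n k ≤ 8 * zeta 3 := by
  have h1 : H n k ≤ H 0 (n + k) := by
    unfold H
    rw [show 0 + (n + k) + 1 = n + k + 1 by ring]
    gcongr
    omega
  refine h1.trans ?_
  rw [H_zero]
  unfold zeta
  gcongr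
  exact summable_zeta.sum_le_tsum _ fun i _ => by positivity

lemma H_lim : Tendsto (fun k => H 0 k) atTop (𝓝 (8 * zeta 3)) := by
  simp only [H_zero]
  refine Tendsto.const_mul _ ?_
  refine (summable_zeta.hasSum.tendsto_sum_nat).comp ?_
  exact tendsto_atTop_mono (fun k => by show k ≤ 2 * k + 1; omega) tendsto_id

lemma wz (n k : ℕ) : F (n + 1) k - F n k = G n (k + 1) - G n k := by
  unfold F G A P
  rw [H_succ, H_succ_right, c_succ, r_succ, q_succ, q_succ_right, pow_succ]
  push_cast
  generalize H n k = h
  generalize c n = c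
  generalize r k = r
  generalize q n k = q
  generalize ((-1:ℝ)) ^ n = s
  obtain ⟨m, hm⟩ : ∃ m : ℝ, m = (n:ℝ) + 1 / 2 := ⟨_, rfl⟩
  have hm0 : 0 < m := by rw [hm]; positivity
  have hn : (n:ℝ) = m - 1 / 2 := by rw [hm]; ring
  have hn1 : 0 < (n:ℝ) + 1 := by positivity
  obtain ⟨w, hw⟩ : ∃ w : ℝ, w = (n:ℝ) + k + 3 / 2 := ⟨_, rfl⟩
  have hw0 : 0 < w := by rw [hw]; positivity
  have hk1 : 0 < (k:ℝ) + 1 := by positivity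
  have hk3 : 0 < (k:ℝ) + 3 / 2 := by positivity
  rw [← hw, ← hm]
  obtain ⟨y, hy⟩ : ∃ y : ℝ, y = (k:ℝ) + 1 := ⟨_, rfl⟩
  rw [← hy] at hk1 ⊢
  obtain ⟨v, hv⟩ : ∃ v : ℝ, v = (k:ℝ) + 3 / 2 := ⟨_, rfl⟩
  rw [← hv] at hk3 ⊢
  obtain ⟨t, ht⟩ : ∃ t : ℝ, t = (n:ℝ) + 1 := ⟨_, rfl⟩
  rw [← ht] at hn1 ⊢
  field_simp
  have e1 : (k:ℝ) = y - 1 := by rw [hy]; ring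
  have e2 : w = y + m := by rw [hw, hn, e1]; ring
  have e3 : t = m + 1 / 2 := by rw [ht, hn]; ring
  rw [e1, hn, e2, e3]
  ring

lemma A_abs (n k : ℕ) : |A n k| * ((k:ℝ) + 1) ^ 2 ≤ 16 * (1 / 4) ^ n * q n k ^ 4 := by
  unfold A
  rw [abs_mul, abs_mul, abs_mul, abs_pow, abs_neg, abs_one, one_pow, one_mul,
    abs_of_nonneg (c_nonneg n), abs_of_nonneg (pow_nonneg (r_nonneg k) 4),
    abs_of_nonneg (pow_nonneg (q_nonneg n k) 4)]
  have h1 := c_le n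
  have h2 := r_four_le k
  calc _ = (r k ^ 4 * ((k:ℝ) + 1) ^ 2) * c n * q n k ^ 4 := by ring
    _ ≤ 16 * (1 / 4) ^ n * q n k ^ 4 := by
      have := c_nonneg n
      have := q_nonneg n k
      gcongr

/-- Summable majorant. -/
noncomputable def B (n : ℕ) : ℝ := 16 * (20 * zeta 3 + 1) * (((n:ℝ) + 1) ^ 2 * (1 / 4) ^ n)

lemma zeta_nonneg : 0 ≤ zeta 3 := tsum_nonneg fun n => by positivity

lemma G_abs' (n k : ℕ) : |G n k| ≤ B n * q n k ^ 4 := by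
  have hz := zeta_nonneg
  unfold G
  have hP0 : 0 ≤ P n k := by unfold P; positivity
  have hP : P n k ≤ 5 / 2 * ((n:ℝ) + 1) ^ 2 * ((k:ℝ) + 1) ^ 2 := by
    have e : ((n:ℝ) + 1) * (k + 1) ≥ (n + 1 / 2) + k := by
      have : (0:ℝ) ≤ n * k := by positivity
      nlinarith
    have e2 : (((n:ℝ) + 1 / 2) + k) ^ 2 ≤ (((n:ℝ) + 1) * (k + 1)) ^ 2 := by
      gcongr
    unfold P
    have : (0:ℝ) ≤ n * k := by positivity
    have : (0:ℝ) ≤ n := by positivity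
    have : (0:ℝ) ≤ k := by positivity
    nlinarith [sq_nonneg (k:ℝ)]
  have hH := H_le n k
  have hH0 := H_nonneg n k
  have hm : 1 / (2 * ((n:ℝ) + 1 / 2)) ≤ 1 := by
    rw [div_le_one (by positivity)]
    have : (0:ℝ) ≤ n := by positivity
    linarith
  have hone : (1:ℝ) ≤ ((n:ℝ) + 1) ^ 2 * ((k:ℝ) + 1) ^ 2 := by
    have h1 : (1:ℝ) ≤ ((n:ℝ) + 1) ^ 2 := one_le_pow₀ (by linarith [(Nat.cast_nonneg n : (0:ℝ) ≤ n)])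
    have h2 : (1:ℝ) ≤ ((k:ℝ) + 1) ^ 2 := one_le_pow₀ (by linarith [(Nat.cast_nonneg k : (0:ℝ) ≤ k)])
    nlinarith
  have hX : P n k * H n k + 1 / (2 * ((n:ℝ) + 1 / 2))
      ≤ (20 * zeta 3 + 1) * (((n:ℝ) + 1) ^ 2 * ((k:ℝ) + 1) ^ 2) := by
    have : P n k * H n k ≤ (5 / 2 * ((n:ℝ) + 1) ^ 2 * ((k:ℝ) + 1) ^ 2) * (8 * zeta 3) := by
      gcongr
    nlinarith
  rw [abs_mul, abs_of_nonneg (a := P n k * H n k + 1 / (2 * ((n:ℝ) + 1 / 2))) (by positivity)]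
  calc _ ≤ |A n k| * ((20 * zeta 3 + 1) * (((n:ℝ) + 1) ^ 2 * ((k:ℝ) + 1) ^ 2)) := by gcongr
    _ = (20 * zeta 3 + 1) * ((n:ℝ) + 1) ^ 2 * (|A n k| * ((k:ℝ) + 1) ^ 2) := by ring
    _ ≤ (20 * zeta 3 + 1) * ((n:ℝ) + 1) ^ 2 * (16 * (1 / 4) ^ n * q n k ^ 4) := by
      exact mul_le_mul_of_nonneg_left (A_abs n k) (by positivity)
    _ = B n * q n k ^ 4 := by unfold B; ring

lemma B_nonneg (n : ℕ) : 0 ≤ B n := by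
  have := zeta_nonneg
  unfold B; positivity

lemma G_abs (n k : ℕ) : |G n k| ≤ B n := by
  refine (G_abs' n k).trans (mul_le_of_le_one_right (B_nonneg n) ?_)
  exact pow_le_one₀ (q_nonneg n k) (q_le_one n k)

lemma B_summable : Summable B := by
  unfold B
  refine Summable.mul_left _ ?_
  have h2 := summable_pow_mul_geometric_of_norm_lt_one (R := ℝ) 2 (r := 1 / 4) (by norm_num)
  have h := ((summable_nat_add_iff 1).2 h2).mul_left 4
  refine h.congr fun n => ?_
  push_cast
  rw [pow_succ (1 / 4 : ℝ) n]
  ring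

lemma G_summable (k : ℕ) : Summable fun n => G n k :=
  Summable.of_norm_bounded B_summable fun n => by simpa using G_abs n k

lemma F_lim (k : ℕ) : Tendsto (fun n => F n k) atTop (𝓝 0) := by
  have hz := zeta_nonneg
  have hB := (B_summable.tendsto_atTop_zero).const_mul (8 * zeta 3 * (4 * (k + 1)))
  rw [mul_zero] at hB
  refine squeeze_zero_norm (fun n => ?_) hB
  rw [Real.norm_eq_abs]
  unfold F
  rw [abs_mul, abs_mul, abs_of_nonneg (H_nonneg n k),
    abs_of_nonneg (a := 2 * (n:ℝ) * (2 * k + n + 3 / 2)) (by positivity)]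
  have hA : |A n k| ≤ 16 * (1 / 4) ^ n := by
    have h := A_abs n k
    have h2 : (1:ℝ) ≤ ((k:ℝ) + 1) ^ 2 := one_le_pow₀ (by linarith [(Nat.cast_nonneg k : (0:ℝ) ≤ k)])
    have h3 : q n k ^ 4 ≤ 1 := pow_le_one₀ (q_nonneg n k) (q_le_one n k)
    calc |A n k| ≤ |A n k| * ((k:ℝ) + 1) ^ 2 := le_mul_of_one_le_right (abs_nonneg _) h2
      _ ≤ _ := h
      _ ≤ _ := mul_le_of_le_one_right (by positivity) h3
  have hp : 2 * (n:ℝ) * (2 * k + n + 3 / 2) ≤ 4 * (k + 1) * ((n:ℝ) + 1) ^ 2 := by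
    have : (0:ℝ) ≤ n * k := by positivity
    have : (0:ℝ) ≤ n * n * k := by positivity
    have : (0:ℝ) ≤ n := by positivity
    have : (0:ℝ) ≤ k := by positivity
    nlinarith
  calc _ ≤ 4 * (k + 1) * ((n:ℝ) + 1) ^ 2 * (16 * (1 / 4) ^ n) * (8 * zeta 3) := by
        have := H_le n k
        have := H_nonneg n k
        gcongr
    _ = 8 * zeta 3 * (4 * (k + 1)) * (16 * 1 * (((n:ℝ) + 1) ^ 2 * (1 / 4) ^ n)) := by ring
    _ ≤ _ := by
        unfold B
        gcongr
        linarith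

lemma G_const (k : ℕ) : ∑' n, G n (k + 1) = ∑' n, G n k := by
  have h1 := ((G_summable (k + 1)).hasSum.sub (G_summable k).hasSum).tendsto_sum_nat
  have h2 : (fun N => ∑ n ∈ Finset.range N, (G n (k + 1) - G n k)) = fun N => F N k := by
    funext N
    simp_rw [← wz]
    rw [Finset.sum_range_sub (fun n => F n k)]
    simp [F]
  rw [h2] at h1
  have := tendsto_nhds_unique h1 (F_lim k)
  linarith

lemma G_const' (k : ℕ) : ∑' n, G n k = ∑' n, G n 0 := by
  induction k with
  | zero => rfl
  | succ k ih => rw [G_const, ih]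

lemma q_lim (n : ℕ) : Tendsto (fun k => q (n + 1) k) atTop (𝓝 0) :=
  squeeze_zero (fun k => q_nonneg _ k) (fun k => q_le n k) tendsto_one_div_add_atTop_nhds_zero_nat

lemma G_lim_succ (n : ℕ) : Tendsto (fun k => G (n + 1) k) atTop (𝓝 0) := by
  have h := ((q_lim n).pow 4).const_mul (B (n + 1))
  simp only [ne_eq, OfNat.ofNat_ne_zero, not_false_eq_true, zero_pow, mul_zero] at h
  exact squeeze_zero_norm (fun k => by simpa using G_abs' (n + 1) k) h

lemma G_lim_zero : Tendsto (fun k => G 0 k) atTop (𝓝 (Real.pi ^ 2 * (8 * zeta 3))) := by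
  have hW := Real.Wallis.tendsto_W_nhds_pi_div_two
  have hi : Tendsto (fun k : ℕ => 1 / ((k:ℝ) + 1 / 2)) atTop (𝓝 0) := by
    refine squeeze_zero (g := fun k : ℕ => 2 * (1 / ((k:ℝ) + 1))) (fun k => by positivity)
      (fun k => ?_) ?_
    · rw [mul_one_div, div_le_div_iff₀ (by positivity) (by positivity)]
      have : (0:ℝ) ≤ k := by positivity
      linarith
    · simpa using (tendsto_one_div_add_atTop_nhds_zero_nat (𝕜 := ℝ)).const_mul 2
  have e : ∀ k : ℕ, G 0 k = (2 * Real.Wallis.W k) ^ 2 *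
      ((1 + 1 / 2 * (1 / ((k:ℝ) + 1 / 2)) + (1 / 8) * (1 / ((k:ℝ) + 1 / 2)) ^ 2) * H 0 k
       + (1 / ((k:ℝ) + 1 / 2)) ^ 2) := by
    intro k
    rw [← r_wallis]
    unfold G A P c q
    have : (k:ℝ) + 1 / 2 ≠ 0 := by positivity
    generalize H 0 k = h
    obtain ⟨x, hx⟩ : ∃ x : ℝ, x = (k:ℝ) + 1 / 2 := ⟨_, rfl⟩
    rw [← hx] at this ⊢
    have hk : (k:ℝ) = x - 1 / 2 := by rw [hx]; ring
    simp
    rw [hk]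
    field_simp
    ring
  simp only [e]
  have := ((hW.const_mul 2).pow 2).mul
    (((((hi.const_mul (1 / 2)).const_add 1).add ((hi.pow 2).const_mul (1 / 8))).mul H_lim).add
      (hi.pow 2))
  convert this using 2
  ring

lemma G_tsum : ∑' n, G n 0 = Real.pi ^ 2 * (8 * zeta 3) := by
  have h := tendsto_tsum_of_dominated_convergence (𝓕 := atTop) (f := fun k n => G n k)
    (g := fun n => if n = 0 then Real.pi ^ 2 * (8 * zeta 3) else 0) (bound := B) B_summable
    (by
      intro n
      cases n with
      | zero => simpa using G_lim_zero
      | succ n => simpa using G_lim_succ n)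
    (Eventually.of_forall fun k n => by simpa using G_abs n k)
  simp only [G_const', tsum_ite_eq] at h
  exact tendsto_nhds_unique tendsto_const_nhds h

lemma G_zero_right (n : ℕ) : G n 0 = 16 * (((2*n).choose n : ℝ) / ((2*(n:ℝ)+1)^2 * (-16)^n) *
        (5 * (∑ j ∈ Finset.range (n+1), 1 / (2*(j:ℝ)+1)^3) + 1 / (2*(n:ℝ)+1)^3)) := by
  have hH : H n 0 = 8 * ∑ j ∈ Finset.range (n+1), 1 / (2*(j:ℝ)+1)^3 := by
    unfold H
    rw [Finset.mul_sum]
    simp only [Finset.range_zero, Finset.sum_empty, zero_add, add_zero]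
    refine Finset.sum_congr rfl fun j _ => ?_
    have h : (2 * (j:ℝ) + 1) ≠ 0 := by positivity
    rw [show (j:ℝ) + 1 / 2 = (2 * j + 1) / 2 by ring]
    field_simp
    norm_num
  unfold G A P c
  rw [hH, q_zero_right, Nat.centralBinom_eq_two_mul_choose]
  have h16 : (-16:ℝ) ^ n = (-1) ^ n * 16 ^ n := by rw [← mul_pow]; norm_num
  have hs : ((-1:ℝ)) ^ n = 1 / (-1) ^ n := by
    rw [eq_div_iff (by positivity), ← mul_pow]; norm_num
  have hr : r 0 = 2 := by simp [r]
  have h : (2 * (n:ℝ) + 1) ≠ 0 := by positivity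
  rw [h16, hr]
  nth_rewrite 1 [hs]
  rw [show (n:ℝ) + 1 / 2 = (2 * n + 1) / 2 by ring]
  generalize (2 * (n:ℝ) + 1) = x at *
  generalize (∑ j ∈ Finset.range (n+1), 1 / (2*(j:ℝ)+1)^3) = S
  have hu : ((-1:ℝ)) ^ n ≠ 0 := by positivity
  generalize ((-1:ℝ)) ^ n = u at *
  push_cast
  field_simp
  ring

end WZ

theorem stmt_4 :
    Tendsto (fun N => ∑ n ∈ Finset.range N,
      ((2*n).choose n : ℝ) / ((2*(n:ℝ)+1)^2 * (-16)^n) *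
        (5 * (∑ j ∈ Finset.range (n+1), 1 / (2*(j:ℝ)+1)^3) + 1 / (2*(n:ℝ)+1)^3))
      atTop (𝓝 (Real.pi^2 / 2 * zeta 3)) := by
  have h := ((WZ.G_summable 0).hasSum.tendsto_sum_nat).const_mul (1 / 16)
  rw [WZ.G_tsum] at h
  convert h using 2
  · rw [Finset.mul_sum]
    refine Finset.sum_congr rfl fun n _ => ?_
    rw [WZ.G_zero_right]
    ring
  · ring
end

section
/- $\sum_{n\geq 0} \frac{\binom{2n}{n}}{(2n+1)^2 (-16)^n}\left(5 \sum_{j=0}^{n-1} \frac{1}{(2j+1)^4} + \frac{1}{(2n+1)^4}\right) = \frac{7\pi^6}{7200}$. -/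
open Filter Topology

namespace Stmt5

/-- the coefficient `binom(2n,n)/(-16)^n` -/
noncomputable def E (n : ℕ) : ℝ := ((2*n).choose n : ℝ) / (-16)^n

noncomputable def rho (n k : ℕ) : ℝ :=
  (1 / ((n:ℝ) + 1/2)) * ∏ j ∈ Finset.range k, (((j:ℝ) + 1) / ((n:ℝ) + j + 3/2))

noncomputable def h (n k : ℕ) : ℝ :=
  4 * (∑ j ∈ Finset.range n, 1 / ((j:ℝ) + 1/2)^4) - (∑ j ∈ Finset.range k, 1 / ((j:ℝ) + 1)^4)
    + ∑ j ∈ Finset.range (n + k + 1), 1 / ((j:ℝ) + 1/2)^4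

noncomputable def G (n k : ℕ) : ℝ :=
  E n * ((k:ℝ)^2 + 3 * ((n:ℝ)+1/2) * k + 5/2 * ((n:ℝ)+1/2)^2) * rho n k ^ 4 * h n k

noncomputable def F (n k : ℕ) : ℝ :=
  2 * n * E n * ((n:ℝ) + 3/2 + 2 * k) * rho n k ^ 4 * h n k

lemma E_succ (n : ℕ) : E (n+1) = - ((n:ℝ) + 1/2) / (4 * ((n:ℝ)+1)) * E n := by
  have h1 := Nat.succ_mul_centralBinom_succ n
  simp only [Nat.centralBinom_eq_two_mul_choose] at h1
  have h2 : ((n:ℝ)+1) * ((2*(n+1)).choose (n+1) : ℝ) = 2 * (2*n+1) * ((2*n).choose n : ℝ) := by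
    exact_mod_cast h1
  have h3 : ((2*(n+1)).choose (n+1) : ℝ) = 2 * (2*n+1) * ((2*n).choose n : ℝ) / ((n:ℝ)+1) := by
    rw [eq_div_iff (by positivity), ← h2]; ring
  unfold E
  rw [h3, pow_succ]
  have : ((-16:ℝ))^n ≠ 0 := by positivity
  field_simp
  ring

lemma E_bound (n : ℕ) : |E n| ≤ (1/4)^n := by
  induction n with
  | zero => simp [E]
  | succ n ih =>
    rw [E_succ, abs_mul, pow_succ, mul_comm]
    apply mul_le_mul ih _ (abs_nonneg _) (by positivity)
    rw [abs_div, abs_neg, abs_of_pos (by positivity), abs_of_pos (by positivity),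
      div_le_div_iff₀ (by positivity) (by positivity)]
    linarith

lemma rho_pos (n k : ℕ) : 0 < rho n k := by
  unfold rho
  apply mul_pos (by positivity)
  exact Finset.prod_pos fun j _ => by positivity

lemma rho_succ_right (n k : ℕ) :
    rho n (k+1) = rho n k * (((k:ℝ) + 1) / ((n:ℝ) + k + 3/2)) := by
  unfold rho
  rw [Finset.prod_range_succ, mul_assoc]

lemma rho_succ_left (n k : ℕ) :
    rho (n+1) k = rho n k * (((n:ℝ) + 1/2) / ((n:ℝ) + k + 3/2)) := by
  induction k with
  | zero => simp only [rho, Finset.range_zero, Finset.prod_empty]; push_cast; field_simp; ring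
  | succ k ih =>
    rw [rho_succ_right, ih, rho_succ_right]
    push_cast
    have : (n:ℝ) + 1 + k + 3/2 ≠ 0 := by positivity
    have : (n:ℝ) + k + 3/2 ≠ 0 := by positivity
    have : (n:ℝ) + (k + 1) + 3/2 ≠ 0 := by positivity
    field_simp
    ring

lemma h_succ_right (n k : ℕ) :
    h n (k+1) = h n k - 1 / ((k:ℝ)+1)^4 + 1 / ((n:ℝ) + k + 3/2)^4 := by
  unfold h
  rw [show n + (k+1) + 1 = (n + k + 1) + 1 by ring, Finset.sum_range_succ _ k,
    Finset.sum_range_succ _ (n+k+1)]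
  have : (((n + k + 1 : ℕ) : ℝ) + 1/2) = (n:ℝ) + k + 3/2 := by push_cast; ring
  rw [this]; ring

lemma h_succ_left (n k : ℕ) :
    h (n+1) k = h n k + 4 / ((n:ℝ)+1/2)^4 + 1 / ((n:ℝ) + k + 3/2)^4 := by
  unfold h
  rw [show n + 1 + k + 1 = (n + k + 1) + 1 by ring, Finset.sum_range_succ _ n,
    Finset.sum_range_succ _ (n+k+1)]
  have : (((n + k + 1 : ℕ) : ℝ) + 1/2) = (n:ℝ) + k + 3/2 := by push_cast; ring
  rw [this]; ring

lemma wz (n k : ℕ) : F (n+1) k - F n k = G n (k+1) - G n k := by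
  unfold F G
  rw [E_succ, rho_succ_left, rho_succ_right, h_succ_left, h_succ_right]
  push_cast
  generalize E n = e
  generalize rho n k = r
  generalize h n k = hh
  have h1 : (n:ℝ) + k + 3/2 ≠ 0 := by positivity
  have h2 : (n:ℝ) + 1/2 ≠ 0 := by positivity
  have h3 : (n:ℝ) + 1 ≠ 0 := by positivity
  have h4 : (k:ℝ) + 1 ≠ 0 := by positivity
  obtain ⟨m, hm⟩ : ∃ m : ℝ, m = (n:ℝ) + 1/2 := ⟨_, rfl⟩
  obtain ⟨s, hs⟩ : ∃ s : ℝ, s = (n:ℝ) + k + 3/2 := ⟨_, rfl⟩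
  obtain ⟨l, hl⟩ : ∃ l : ℝ, l = (k:ℝ) + 1 := ⟨_, rfl⟩
  have hsm : s = m + l := by rw [hs, hm, hl]; ring
  rw [← hm, ← hs, ← hl]
  rw [← hs] at h1
  rw [← hm] at h2
  rw [← hl] at h4
  have hk : (k:ℝ) = l - 1 := by rw [hl]; ring
  have hn : (n:ℝ) = m - 1/2 := by rw [hm]; ring
  rw [hn] at h3
  rw [hk, hn]
  have e1 : 2 * (m - 1/2 + 1) * (-m / (4 * (m - 1/2 + 1)) * e) = - m / 2 * e := by
    generalize m - 1/2 + 1 = q at h3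
    field_simp
    norm_num
  rw [e1]
  field_simp
  rw [hsm]
  ring

lemma rho_sq_bound (n k : ℕ) : rho n k ^ 2 * ((k:ℝ)+1) ≤ 4 := by
  induction k with
  | zero =>
    simp only [rho, Finset.range_zero, Finset.prod_empty]
    push_cast
    rw [mul_one, zero_add, mul_one, div_pow, div_le_iff₀ (by positivity)]
    have : (0:ℝ) ≤ n := by positivity
    nlinarith
  | succ k ih =>
    refine le_trans ?_ ih
    rw [rho_succ_right, mul_pow, mul_assoc]
    apply mul_le_mul_of_nonneg_left _ (by positivity)
    push_cast
    rw [div_pow, div_mul_eq_mul_div, div_le_iff₀ (by positivity)]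
    have hn : (0:ℝ) ≤ n := by positivity
    have hk : (0:ℝ) ≤ k := by positivity
    have : ((k:ℝ)+1) * (k+1+1) ≤ ((n:ℝ) + k + 3/2)^2 := by nlinarith [mul_nonneg hn hk]
    calc ((k:ℝ)+1)^2 * (k+1+1) = (k+1) * (((k:ℝ)+1) * (k+1+1)) := by ring
      _ ≤ _ := mul_le_mul_of_nonneg_left this (by positivity)

lemma rho4_bound (n k : ℕ) : rho n k ^ 4 * ((k:ℝ)+1)^2 ≤ 16 := by
  have h1 := rho_sq_bound n k
  have h2 : 0 ≤ rho n k ^ 2 * ((k:ℝ)+1) := by positivity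
  calc rho n k ^ 4 * ((k:ℝ)+1)^2 = (rho n k ^ 2 * ((k:ℝ)+1))^2 := by ring
    _ ≤ 4^2 := by gcongr
    _ = 16 := by norm_num

lemma p_bound (n k : ℕ) : (k:ℝ)^2 + 3 * ((n:ℝ)+1/2) * k + 5/2 * ((n:ℝ)+1/2)^2
    ≤ 7 * ((n:ℝ)+1)^2 * ((k:ℝ)+1)^2 := by
  have hn : (0:ℝ) ≤ n := by positivity
  have hk : (0:ℝ) ≤ k := by positivity
  have : 7 * ((n:ℝ)+1)^2 * ((k:ℝ)+1)^2 - ((k:ℝ)^2 + 3 * ((n:ℝ)+1/2) * k + 5/2 * ((n:ℝ)+1/2)^2)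
    = 7*n^2*k^2 + 14*n^2*k + 9/2*n^2 + 14*n*k^2 + 25*n*k+ 23/2*n + 6*k^2 + 25/2*k + 51/8 := by ring
  have : 0 ≤ 7*(n:ℝ)^2*k^2 + 14*n^2*k + 9/2*n^2 + 14*n*k^2 + 25*n*k+ 23/2*n + 6*k^2 + 25/2*k + 51/8 := by
    positivity
  linarith

lemma hasSum_int : HasSum (fun j : ℕ => 1 / ((j:ℝ) + 1)^4) (Real.pi^4/90) := by
  have := (hasSum_nat_add_iff' (f := fun n : ℕ => (1:ℝ) / (n:ℝ)^4) 1).2 hasSum_zeta_four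
  simpa using this

lemma hasSum_half : HasSum (fun j : ℕ => 1 / ((j:ℝ) + 1/2)^4) (Real.pi^4/6) := by
  have hs : Summable (fun j : ℕ => 1 / ((j:ℝ) + 1/2)^4) := by
    have h0 : Summable (fun j : ℕ => (1:ℝ) / ((2*j+1 : ℕ):ℝ)^4) :=
      hasSum_zeta_four.summable.comp_injective (i := fun j : ℕ => 2*j+1)
        (fun a b hab => by simpa using hab)
    refine (h0.mul_left 16).congr fun j => ?_
    push_cast
    field_simp
    ring
  have ho : HasSum (fun j : ℕ => (1:ℝ) / ((2*j+1 : ℕ):ℝ)^4)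
      (1/16 * ∑' j : ℕ, 1 / ((j:ℝ) + 1/2)^4) := by
    refine (hs.hasSum.mul_left (1/16)).congr_fun ?_
    intro j
    push_cast
    field_simp
    ring
  have he : HasSum (fun j : ℕ => (1:ℝ) / ((2*j : ℕ):ℝ)^4) (1/16 * (Real.pi^4/90)) := by
    refine (hasSum_zeta_four.mul_left (1/16)).congr_fun ?_
    intro j
    push_cast
    rw [mul_pow]
    rw [one_div_mul_one_div]
    norm_num
  have := (HasSum.even_add_odd (f := fun n : ℕ => (1:ℝ) / (n:ℝ)^4) he ho).unique hasSum_zeta_four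
  have h3 : ∑' j : ℕ, 1 / ((j:ℝ) + 1/2)^4 = Real.pi^4/6 := by linarith
  rw [← h3]
  exact hs.hasSum

lemma h_bound (n k : ℕ) : |h n k| ≤ (64 + Real.pi^4) * ((n:ℝ) + 1) := by
  have h1 : (∑ j ∈ Finset.range n, 1 / ((j:ℝ) + 1/2)^4) ≤ Real.pi^4/6 :=
    sum_le_hasSum _ (fun j _ => by positivity) hasSum_half
  have h2 : (∑ j ∈ Finset.range (n+k+1), 1 / ((j:ℝ) + 1/2)^4) ≤ Real.pi^4/6 :=
    sum_le_hasSum _ (fun j _ => by positivity) hasSum_half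
  have h3 : (∑ j ∈ Finset.range k, 1 / ((j:ℝ) + 1)^4) ≤ Real.pi^4/90 :=
    sum_le_hasSum _ (fun j _ => by positivity) hasSum_int
  have h1' : 0 ≤ (∑ j ∈ Finset.range n, 1 / ((j:ℝ) + 1/2)^4) :=
    Finset.sum_nonneg (fun j _ => by positivity)
  have h2' : 0 ≤ (∑ j ∈ Finset.range (n+k+1), 1 / ((j:ℝ) + 1/2)^4) :=
    Finset.sum_nonneg (fun j _ => by positivity)
  have h3' : 0 ≤ (∑ j ∈ Finset.range k, 1 / ((j:ℝ) + 1)^4) :=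
    Finset.sum_nonneg (fun j _ => by positivity)
  have hp : 0 < Real.pi^4 := by positivity
  have h4 : |h n k| ≤ 64 + Real.pi^4 := by
    unfold h
    rw [abs_le]
    constructor <;> linarith
  have hn : (0:ℝ) ≤ n := by positivity
  nlinarith

noncomputable def A : ℝ := 64 + Real.pi^4

lemma A_pos : 0 < A := by unfold A; positivity

lemma G_bound' (n k : ℕ) : |G n k| ≤ (1/4)^n * (7 * ((n:ℝ)+1)^2 * (rho n k ^ 4 * ((k:ℝ)+1)^2)) *
    (A * ((n:ℝ)+1)) := by
  unfold G
  rw [abs_mul, mul_assoc, abs_mul]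
  have hp := p_bound n k
  have h0 : 0 ≤ (k:ℝ)^2 + 3 * ((n:ℝ)+1/2) * k + 5/2 * ((n:ℝ)+1/2)^2 := by positivity
  have hr := rho_pos n k
  apply mul_le_mul _ (h_bound n k) (abs_nonneg _) (by positivity)
  apply mul_le_mul (E_bound n) _ (abs_nonneg _) (by positivity)
  rw [abs_of_nonneg (by positivity)]
  calc _ ≤ (7 * ((n:ℝ)+1)^2 * ((k:ℝ)+1)^2) * rho n k ^ 4 := by gcongr
    _ = _ := by ring

lemma G_bound (n k : ℕ) : |G n k| ≤ 112 * A * (((n:ℝ)+1)^3 * (1/4)^n) := by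
  refine (G_bound' n k).trans ?_
  have := rho4_bound n k
  have hA := A_pos
  calc _ ≤ (1/4)^n * (7 * ((n:ℝ)+1)^2 * 16) * (A * ((n:ℝ)+1)) := by gcongr
    _ = _ := by ring

lemma summable_poly : Summable (fun n : ℕ => ((n:ℝ)+1)^3 * (1/4:ℝ)^n) := by
  have h0 : Summable (fun n : ℕ => (n:ℝ)^3 * (1/4:ℝ)^n) :=
    summable_pow_mul_geometric_of_norm_lt_one 3 (by norm_num)
  have h1 := ((summable_nat_add_iff 1).2 h0).mul_left 4
  refine h1.congr fun n => ?_
  push_cast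
  rw [pow_succ (1/4:ℝ) n]
  ring

lemma summable_bound : Summable (fun n : ℕ => 112 * A * (((n:ℝ)+1)^3 * (1/4)^n)) :=
  summable_poly.mul_left _

lemma G_summable (k : ℕ) : Summable (fun n => G n k) :=
  Summable.of_norm_bounded summable_bound (fun n => G_bound n k)

lemma F_tendsto (k : ℕ) : Tendsto (fun n => F n k) atTop (𝓝 0) := by
  have h1 := (summable_poly.mul_left (2 * (2 * ((k:ℝ)+1)) * 16 * A)).tendsto_atTop_zero
  refine squeeze_zero_norm (fun n => ?_) h1
  have hA := A_pos
  have hr := rho_pos n k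
  have h4 : rho n k ^ 4 ≤ 16 := by
    refine le_trans ?_ (rho4_bound n k)
    apply le_mul_of_one_le_right (by positivity)
    have : (0:ℝ) ≤ k := by positivity
    nlinarith
  have h5 : (n:ℝ) + 3/2 + 2 * k ≤ 2 * ((k:ℝ)+1) * ((n:ℝ)+1) := by
    have hn : (0:ℝ) ≤ n := by positivity
    have hk : (0:ℝ) ≤ k := by positivity
    nlinarith [mul_nonneg hn hk]
  have hE := E_bound n
  have hh := h_bound n k
  rw [Real.norm_eq_abs]
  unfold F
  rw [abs_mul, abs_mul, abs_mul, abs_mul]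
  rw [abs_of_nonneg (show 0 ≤ rho n k ^ 4 by positivity),
    abs_of_nonneg (show 0 ≤ (n:ℝ) + 3/2 + 2 * k by positivity),
    abs_of_nonneg (show 0 ≤ 2 * (n:ℝ) by positivity)]
  calc _ ≤ 2 * ((n:ℝ)+1) * (1/4)^n * (2 * ((k:ℝ)+1) * ((n:ℝ)+1)) * 16 * (A * ((n:ℝ)+1)) := by
        unfold A
        gcongr
        linarith
    _ = _ := by ring

lemma G_tsum_succ (k : ℕ) : ∑' n, G n (k+1) = ∑' n, G n k := by
  have h1 : Tendsto (fun N => ∑ n ∈ Finset.range N, (G n (k+1) - G n k)) atTop (𝓝 0) := by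
    have : (fun N => ∑ n ∈ Finset.range N, (G n (k+1) - G n k)) = fun N => F N k := by
      funext N
      have h2 : ∀ n ∈ Finset.range N, G n (k+1) - G n k = F (n+1) k - F n k :=
        fun n _ => (wz n k).symm
      rw [Finset.sum_congr rfl h2, Finset.sum_range_sub (fun n => F n k)]
      simp [F]
    rw [this]
    exact F_tendsto k
  have h2 := ((G_summable (k+1)).hasSum.sub (G_summable k).hasSum).tendsto_sum_nat
  have := tendsto_nhds_unique h2 h1
  linarith

lemma G_tsum (k : ℕ) : ∑' n, G n k = ∑' n, G n 0 := by
  induction k with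
  | zero => rfl
  | succ k ih => rw [G_tsum_succ, ih]

lemma wallis (k : ℕ) : Real.Wallis.W k = rho 0 k ^ 2 * (2*k+1) / 4 := by
  induction k with
  | zero => simp [Real.Wallis.W, rho]; norm_num
  | succ k ih =>
    rw [Real.Wallis.W_succ, ih, rho_succ_right]
    push_cast
    have : (k:ℝ) + 3/2 ≠ 0 := by positivity
    have : (k:ℝ) * 2 + 3 ≠ 0 := by positivity
    field_simp
    ring

lemma h_tendsto : Tendsto (fun k => h 0 k) atTop (𝓝 (7 * Real.pi^4/45)) := by
  have h1 := hasSum_int.tendsto_sum_nat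
  have h2 := hasSum_half.tendsto_sum_nat.comp (tendsto_add_atTop_nat 1)
  have h3 := h2.sub h1
  have : Real.pi^4/6 - Real.pi^4/90 = 7 * Real.pi^4/45 := by ring
  rw [this] at h3
  refine h3.congr fun k => ?_
  simp only [h, Function.comp]
  simp
  ring

lemma inv_tendsto : Tendsto (fun k : ℕ => 1 / ((k:ℝ)+1)) atTop (𝓝 0) :=
  tendsto_one_div_add_atTop_nhds_zero_nat

lemma G_zero_tendsto : Tendsto (fun k => G 0 k) atTop (𝓝 (7 * Real.pi^6/45)) := by
  have hW := Real.Wallis.tendsto_W_nhds_pi_div_two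
  have hq : Tendsto (fun k : ℕ => ((k:ℝ)^2 + 3/2*k + 5/8) / ((k:ℝ)+1/2)^2) atTop (𝓝 1) := by
    have h1 : Tendsto (fun k : ℕ => ((k:ℝ)+1)⁻¹) atTop (𝓝 0) := by
      simpa using inv_tendsto
    have h2 : Tendsto (fun k : ℕ => (1 - 1/2 * ((k:ℝ)+1)⁻¹ + 1/8 * (((k:ℝ)+1)⁻¹)^2) /
        (1 - 1/2 * ((k:ℝ)+1)⁻¹)^2) atTop (𝓝 ((1 - 1/2 * 0 + 1/8 * 0^2) / (1 - 1/2*0)^2)) := by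
      apply Tendsto.div
      · exact (tendsto_const_nhds.sub (h1.const_mul _)).add ((h1.pow 2).const_mul _)
      · exact (tendsto_const_nhds.sub (h1.const_mul _)).pow 2
      · norm_num
    have h3 : ((1 - 1/2 * 0 + 1/8 * 0^2) / (1 - 1/2*0)^2 : ℝ) = 1 := by norm_num
    rw [h3] at h2
    refine h2.congr fun k => ?_
    have e0 : (k:ℝ) + 1 ≠ 0 := by positivity
    have e1 : (k:ℝ) + 1/2 ≠ 0 := by positivity
    have e2 : 1 - 1/2 * ((k:ℝ)+1)⁻¹ = ((k:ℝ)+1/2) / ((k:ℝ)+1) := by field_simp; ring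
    rw [e2]
    rw [div_pow, div_div_eq_mul_div]
    congr 1
    field_simp
    ring
  have h4 := (hq.mul ((hW.const_mul 2).pow 2)).mul h_tendsto
  have e : 1 * (2 * (Real.pi/2))^2 * (7 * Real.pi^4/45) = 7 * Real.pi^6/45 := by ring
  rw [e] at h4
  refine h4.congr fun k => ?_
  rw [wallis]
  unfold G
  have e1 : (k:ℝ) + 1/2 ≠ 0 := by positivity
  have e2 : E 0 = 1 := by simp [E]
  rw [e2]
  push_cast
  rw [show (2 * (rho 0 k ^ 2 * (2 * (k:ℝ) + 1) / 4))^2 = rho 0 k ^ 4 * ((k:ℝ)+1/2)^2 by ring]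
  field_simp
  ring

lemma G_succ_tendsto (n : ℕ) : Tendsto (fun k => G (n+1) k) atTop (𝓝 0) := by
  have hA := A_pos
  set c : ℝ := (1/4)^(n+1) * (7 * (((n+1:ℕ):ℝ)+1)^2 * (16 * ((n:ℝ)+1/2)^4)) *
    (A * (((n+1:ℕ):ℝ)+1)) with hc
  have h1 : Tendsto (fun k : ℕ => c * (1 / ((k:ℝ)+1))^4) atTop (𝓝 0) := by
    have := (inv_tendsto.pow 4).const_mul c
    simpa using this
  refine squeeze_zero_norm (fun k => ?_) h1
  have h2 := G_bound' (n+1) k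
  rw [Real.norm_eq_abs]
  refine h2.trans ?_
  have h3 : rho (n+1) k ^ 4 * ((k:ℝ)+1)^2 ≤ 16 * ((n:ℝ)+1/2)^4 * (1 / ((k:ℝ)+1))^4 := by
    rw [rho_succ_left]
    have h4 := rho4_bound n k
    have h5 : ((n:ℝ)+1/2) / ((n:ℝ) + k + 3/2) ≤ ((n:ℝ)+1/2) * (1 / ((k:ℝ)+1)) := by
      rw [mul_one_div]
      apply div_le_div_of_nonneg_left (by positivity) (by positivity)
      have : (0:ℝ) ≤ n := by positivity
      linarith
    calc _ = (rho n k ^ 4 * ((k:ℝ)+1)^2) * (((n:ℝ)+1/2) / ((n:ℝ) + k + 3/2))^4 := by ring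
      _ ≤ 16 * (((n:ℝ)+1/2) * (1 / ((k:ℝ)+1)))^4 := by gcongr
      _ = _ := by ring
  calc _ ≤ (1/4)^(n+1) * (7 * (((n+1:ℕ):ℝ)+1)^2 * (16 * ((n:ℝ)+1/2)^4 * (1 / ((k:ℝ)+1))^4)) *
    (A * (((n+1:ℕ):ℝ)+1)) := by gcongr
    _ = _ := by rw [hc]; ring

lemma G_value : ∑' n, G n 0 = 7 * Real.pi^6/45 := by
  have h1 : Tendsto (fun k => ∑' n, G n k) atTop
      (𝓝 (∑' n, if n = 0 then 7 * Real.pi^6/45 else 0)) := by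
    apply tendsto_tsum_of_dominated_convergence summable_bound
    · intro n
      cases n with
      | zero => simpa using G_zero_tendsto
      | succ n => simpa using G_succ_tendsto n
    · exact Eventually.of_forall fun k n => G_bound n k
  rw [tsum_ite_eq] at h1
  have h2 : (fun k => ∑' n, G n k) = fun _ => ∑' n, G n 0 := funext G_tsum
  rw [h2] at h1
  exact tendsto_nhds_unique tendsto_const_nhds h1

lemma term_eq (n : ℕ) : ((2*n).choose n : ℝ) / ((2*(n:ℝ)+1)^2 * (-16)^n) *
        (5 * (∑ j ∈ Finset.range n, 1 / (2*(j:ℝ)+1)^4) + 1 / (2*(n:ℝ)+1)^4) = 1/160 * G n 0 := by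
  have hs : (∑ j ∈ Finset.range n, 1 / (2*(j:ℝ)+1)^4)
      = 1/16 * ∑ j ∈ Finset.range n, 1 / ((j:ℝ)+1/2)^4 := by
    rw [Finset.mul_sum]
    refine Finset.sum_congr rfl fun j _ => ?_
    have : (j:ℝ) + 1/2 ≠ 0 := by positivity
    rw [show 2*(j:ℝ)+1 = 2 * (j+1/2) by ring]
    field_simp
    norm_num
  rw [hs]
  unfold G h rho E
  simp only [Finset.range_zero, Finset.prod_empty, Finset.sum_empty, add_zero]
  rw [Finset.sum_range_succ]
  generalize (∑ j ∈ Finset.range n, 1 / ((j:ℝ)+1/2)^4) = s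
  have h1 : (n:ℝ) + 1/2 ≠ 0 := by positivity
  have h2 : ((-16:ℝ))^n ≠ 0 := by positivity
  rw [show 2*(n:ℝ)+1 = 2 * (n+1/2) by ring]
  generalize ((-16:ℝ))^n = t at *
  generalize (n:ℝ) + 1/2 = m at *
  push_cast
  field_simp
  ring

end Stmt5

theorem stmt_5 :
    Tendsto (fun N => ∑ n ∈ Finset.range N,
      ((2*n).choose n : ℝ) / ((2*(n:ℝ)+1)^2 * (-16)^n) *
        (5 * (∑ j ∈ Finset.range n, 1 / (2*(j:ℝ)+1)^4) + 1 / (2*(n:ℝ)+1)^4))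
      atTop (𝓝 (7 * Real.pi^6 / 7200)) := by
  have h1 := ((Stmt5.G_summable 0).hasSum.mul_left (1/160)).tendsto_sum_nat
  rw [Stmt5.G_value] at h1
  have e : 1/160 * (7 * Real.pi^6/45) = 7 * Real.pi^6 / 7200 := by ring
  rw [e] at h1
  refine h1.congr fun N => ?_
  exact Finset.sum_congr rfl fun n _ => (Stmt5.term_eq n).symm
end
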